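/- Let n_1, n_2 be positive integers and p_1, p_2 ∈ [2, ∞]. Then there exists a unimodular bilinear form A : ℓ_{p_1}^{n_1} × ℓ_{p_2}^{n_2} → ℂ (i.e., with all coefficients A(e_i, e_j) of modulus 1) such that ‖A‖ ≤ (n_1^{1/2} + n_2^{1/2}) · n_1^{1/2 − 1/p_1} · n_2^{1/2 − 1/p_2} (with the convention 1/∞ = 0). In other words, in the complex bilinear Kahane–Salem–Zygmund inequality the constant can be taken equal to 1. -/

import Mathlib

open scoped BigOperators ENNReal

noncomputable section

/-- The `ℓ_p` norm on `𝕂^n`, for `p ∈ [1, ∞]` (sup norm when `p = ∞`). -/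
def lpNorm {𝕂 : Type*} [RCLike 𝕂] (p : ℝ≥0∞) {n : ℕ} (x : Fin n → 𝕂) : ℝ :=
  if p = ∞ then ⨆ j, ‖x j‖ else (∑ j, ‖x j‖ ^ p.toReal) ^ (1 / p.toReal)

/-- The operator norm of an `m`-linear form `A : ℓ_{p 1}^{n 1} × ⋯ × ℓ_{p m}^{n m} → 𝕂`,
i.e. the supremum of `‖A x‖` over all `x` with `‖x k‖_{p k} ≤ 1` for every `k`. -/
def opNorm {𝕂 : Type*} [RCLike 𝕂] {m : ℕ} {n : Fin m → ℕ} (p : Fin m → ℝ≥0∞)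
    (A : MultilinearMap 𝕂 (fun k => Fin (n k) → 𝕂) 𝕂) : ℝ :=
  sSup {t | ∃ x : ∀ k, Fin (n k) → 𝕂, (∀ k, lpNorm (p k) (x k) ≤ 1) ∧ t = ‖A x‖}

/-- A multilinear form is unimodular if all its coefficients `A (e_{j 1}, …, e_{j m})`
have modulus 1. -/
def Unimodular {𝕂 : Type*} [RCLike 𝕂] {m : ℕ} {n : Fin m → ℕ}
    (A : MultilinearMap 𝕂 (fun k => Fin (n k) → 𝕂) 𝕂) : Prop :=
  ∀ j : ∀ k, Fin (n k), ‖A (fun k => Pi.single (j k) 1)‖ = 1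

/-- The `m`-linear form `z ↦ ∑_j c j • z^{(1)}_{j 1} ⋯ z^{(m)}_{j m}` determined by the
coefficients `c`. -/
def coeffForm {𝕂 : Type*} [RCLike 𝕂] {m : ℕ} {n : Fin m → ℕ} (c : (∀ k, Fin (n k)) → 𝕂) :
    MultilinearMap 𝕂 (fun k => Fin (n k) → 𝕂) 𝕂 :=
  ∑ j : ∀ k, Fin (n k), (MultilinearMap.mkPiRing 𝕂 (Fin m) (c j)).compLinearMap
    fun k => LinearMap.proj (j k)

/-- The conjugate exponent `p*` of `p ∈ [1,∞]`, defined by `1/p + 1/p* = 1`. -/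
def conjExp (p : ℝ≥0∞) : ℝ≥0∞ := (1 - 1/p)⁻¹

/-! All entries of the discrete Fourier matrix of order `N = max n₁ n₂` have modulus 1. Its
`n₁ × n₂` block `M` contains full rows (if `n₁ ≤ n₂`) or full columns of it, so `M Mᴴ` or `Mᴴ M` is
`N` times the identity, and the C⋆-identity `‖M‖² = ‖Mᴴ M‖` shows that its `ℓ₂ → ℓ₂` norm is at most
`√N ≤ √n₁ + √n₂`. Hölder's inequality `‖x‖₂ ≤ n ^ (1/2 - 1/p) ‖x‖_p` passes from `ℓ₂` to `ℓ_p`. -/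

open Matrix
open MeasureTheory hiding lpNorm
open scoped Matrix.Norms.L2Operator

section lpNorm

variable {𝕂 : Type*} [RCLike 𝕂] {n : ℕ} {p q : ℝ≥0∞}

lemma lpNorm_eq_norm_toLp (hp : p ≠ 0) (x : Fin n → 𝕂) : lpNorm p x = ‖WithLp.toLp p x‖ := by
  rcases eq_or_ne p ∞ with rfl | hp_top
  · simp [lpNorm, PiLp.norm_eq_ciSup]
  · simp [lpNorm, hp_top, PiLp.norm_eq_sum (ENNReal.toReal_pos hp hp_top)]

lemma lpNorm_eq_toReal_eLpNorm_count (hp : p ≠ 0) (x : Fin n → 𝕂) :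
    lpNorm p x = (eLpNorm x p Measure.count).toReal := by
  rcases eq_or_ne p ∞ with rfl | hp_top
  · rw [eLpNorm_exponent_top, eLpNormEssSup_count, ENNReal.toReal_iSup fun j => enorm_ne_top]
    simp [lpNorm]
  · have hsum_ne_top : ∀ j ∈ Finset.univ, ‖x j‖ₑ ^ p.toReal ≠ ∞ := fun j _ =>
      ENNReal.rpow_ne_top_of_nonneg ENNReal.toReal_nonneg enorm_ne_top
    rw [eLpNorm_eq_lintegral_rpow_enorm_toReal hp hp_top, lintegral_count, tsum_fintype,
      ← ENNReal.toReal_rpow, ENNReal.toReal_sum hsum_ne_top]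
    simp [lpNorm, hp_top, ← ENNReal.toReal_rpow]

lemma lpNorm_le_rpow_mul_lpNorm (hp : p ≠ 0) (hpq : p ≤ q) (x : Fin n → 𝕂) :
    lpNorm p x ≤ (n : ℝ) ^ ((1 / p).toReal - (1 / q).toReal) * lpNorm q x := by
  have hq : q ≠ 0 := (hp.bot_lt.trans_le hpq).ne'
  have hexp : 0 ≤ 1 / p.toReal - 1 / q.toReal := by
    have hinv := ENNReal.toReal_mono (ENNReal.inv_ne_top.mpr hp) (ENNReal.inv_le_inv.mpr hpq)
    simpa [ENNReal.toReal_inv] using hinv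
  have holder := eLpNorm_le_eLpNorm_mul_rpow_measure_univ hpq
    (AEStronglyMeasurable.of_discrete (f := x) (μ := Measure.count))
  have hbound_ne_top : eLpNorm x q Measure.count *
      Measure.count (Set.univ : Set (Fin n)) ^ (1 / p.toReal - 1 / q.toReal) ≠ ∞ :=
    ENNReal.mul_ne_top (eLpNorm_count_lt_top_of_lt fun j => enorm_lt_top).ne
      (ENNReal.rpow_ne_top_of_nonneg hexp (measure_ne_top _ _))
  rw [lpNorm_eq_toReal_eLpNorm_count hp, lpNorm_eq_toReal_eLpNorm_count hq, mul_comm]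
  simpa [ENNReal.toReal_mul, ← ENNReal.toReal_rpow] using
    ENNReal.toReal_mono hbound_ne_top holder

end lpNorm

section coeffForm

variable {𝕂 : Type*} [RCLike 𝕂] {m : ℕ} {n : Fin m → ℕ}

lemma coeffForm_apply (c : (∀ k, Fin (n k)) → 𝕂)
    (x : ∀ k, Fin (n k) → 𝕂) : coeffForm c x = ∑ j, (∏ k, x k (j k)) * c j := by
  simp [coeffForm]

lemma coeffForm_single (c : (∀ k, Fin (n k)) → 𝕂)
    (j : ∀ k, Fin (n k)) : coeffForm c (fun k => Pi.single (j k) 1) = c j := by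
  rw [coeffForm_apply, Finset.sum_eq_single j]
  · simp
  · intro i _ hij
    obtain ⟨k, hk⟩ := Function.ne_iff.mp hij
    rw [Finset.prod_eq_zero (Finset.mem_univ k) (Pi.single_eq_of_ne hk _), zero_mul]
  · simp

lemma unimodular_coeffForm_iff {c : (∀ k, Fin (n k)) → 𝕂} :
    Unimodular (coeffForm c) ↔ ∀ j, ‖c j‖ = 1 := by
  simp only [Unimodular, coeffForm_single]

lemma coeffForm_eq_dotProduct_mulVec {n : Fin 2 → ℕ} (M : Matrix (Fin (n 0)) (Fin (n 1)) 𝕂)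
    (x : ∀ k, Fin (n k) → 𝕂) :
    coeffForm (fun j => M (j 0) (j 1)) x = x 0 ⬝ᵥ M *ᵥ x 1 := by
  rw [coeffForm_apply, ← (piFinTwoEquiv fun k => Fin (n k)).symm.sum_comp, Fintype.sum_prod_type]
  simp only [dotProduct, mulVec, Finset.mul_sum]
  refine Finset.sum_congr rfl fun i _ => Finset.sum_congr rfl fun j _ => ?_
  simp [mul_left_comm, mul_comm]

end coeffForm

section l2OperatorNorm

variable {𝕂 m n : Type*} [RCLike 𝕂] [Fintype m] [Fintype n] [DecidableEq n]

lemma norm_dotProduct_mulVec_le (M : Matrix m n 𝕂) (x : m → 𝕂) (y : n → 𝕂) :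
    ‖x ⬝ᵥ M *ᵥ y‖ ≤ ‖M‖ * ‖WithLp.toLp 2 x‖ * ‖WithLp.toLp 2 y‖ := by
  have hstar : ‖WithLp.toLp 2 (star x)‖ = ‖WithLp.toLp 2 x‖ := by
    simp [EuclideanSpace.norm_eq]
  have hinner : x ⬝ᵥ M *ᵥ y = inner 𝕂 (WithLp.toLp 2 (star x)) (WithLp.toLp 2 (M *ᵥ y)) := by
    rw [EuclideanSpace.inner_toLp_toLp, star_star, dotProduct_comm]
  calc ‖x ⬝ᵥ M *ᵥ y‖
      ≤ ‖WithLp.toLp 2 x‖ * ‖WithLp.toLp 2 (M *ᵥ y)‖ := by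
        rw [hinner, ← hstar]
        exact norm_inner_le_norm _ _
    _ ≤ ‖WithLp.toLp 2 x‖ * (‖M‖ * ‖WithLp.toLp 2 y‖) := by
        gcongr
        exact M.l2_opNorm_mulVec (WithLp.toLp 2 y)
    _ = ‖M‖ * ‖WithLp.toLp 2 x‖ * ‖WithLp.toLp 2 y‖ := by ring

lemma l2_opNorm_le_sqrt_of_conjTranspose_mul_self {M : Matrix m n 𝕂} {c : 𝕂}
    (hM : Mᴴ * M = c • 1) : ‖M‖ ≤ √‖c‖ := by
  refine Real.le_sqrt_of_sq_le ?_
  calc ‖M‖ ^ 2 = ‖Mᴴ * M‖ := by rw [l2_opNorm_conjTranspose_mul_self, sq]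
    _ = ‖fun _ : n => c‖ := by rw [hM, smul_one_eq_diagonal, l2_opNorm_diagonal]
    _ ≤ ‖c‖ := pi_norm_const_le c

lemma l2_opNorm_le_sqrt_of_mul_conjTranspose_self [DecidableEq m] {M : Matrix m n 𝕂} {c : 𝕂}
    (hM : M * Mᴴ = c • 1) : ‖M‖ ≤ √‖c‖ := by
  rw [← l2_opNorm_conjTranspose]
  exact l2_opNorm_le_sqrt_of_conjTranspose_mul_self (by rwa [conjTranspose_conjTranspose])

end l2OperatorNorm

lemma opNorm_coeffForm_le {𝕂 : Type*} [RCLike 𝕂] {n : Fin 2 → ℕ} {p : Fin 2 → ℝ≥0∞}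
    (hp : ∀ k, 2 ≤ p k) (M : Matrix (Fin (n 0)) (Fin (n 1)) 𝕂) :
    opNorm p (coeffForm fun j => M (j 0) (j 1)) ≤
      ‖M‖ * (n 0 : ℝ) ^ ((1 : ℝ) / 2 - (1 / p 0).toReal)
        * (n 1 : ℝ) ^ ((1 : ℝ) / 2 - (1 / p 1).toReal) := by
  refine Real.sSup_le ?_ (by positivity)
  rintro _ ⟨x, hx, rfl⟩
  have norm_le (k : Fin 2) :
      ‖WithLp.toLp 2 (x k)‖ ≤ (n k : ℝ) ^ ((1 : ℝ) / 2 - (1 / p k).toReal) := by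
    calc ‖WithLp.toLp 2 (x k)‖ = lpNorm 2 (x k) := (lpNorm_eq_norm_toLp two_ne_zero _).symm
      _ ≤ (n k : ℝ) ^ ((1 / 2 : ℝ≥0∞).toReal - (1 / p k).toReal) * lpNorm (p k) (x k) :=
        lpNorm_le_rpow_mul_lpNorm two_ne_zero (hp k) (x k)
      _ ≤ (n k : ℝ) ^ ((1 / 2 : ℝ≥0∞).toReal - (1 / p k).toReal) :=
        mul_le_of_le_one_right (by positivity) (hx k)
      _ = (n k : ℝ) ^ ((1 : ℝ) / 2 - (1 / p k).toReal) := by simp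
  rw [coeffForm_eq_dotProduct_mulVec]
  refine (norm_dotProduct_mulVec_le M (x 0) (x 1)).trans ?_
  gcongr
  exacts [norm_le 0, norm_le 1]

section fourierBlock

lemma sum_div_pow_of_isPrimitiveRoot {K : Type*} [Field K] {ζ : K} {N a b : ℕ}
    (hζ : IsPrimitiveRoot ζ N) (ha : a < N) (hb : b < N) :
    ∑ j ∈ Finset.range N, (ζ ^ a / ζ ^ b) ^ j = if a = b then (N : K) else 0 := by
  have hζ0 : ζ ≠ 0 := hζ.ne_zero (by omega)
  split_ifs with hab
  · simp [hab, hζ0]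
  · have hne : ζ ^ a / ζ ^ b ≠ 1 := fun h =>
      hab (hζ.pow_inj ha hb ((div_eq_one_iff_eq (pow_ne_zero b hζ0)).mp h))
    have hpow : (ζ ^ a / ζ ^ b) ^ N = 1 := by
      rw [div_pow, pow_right_comm, pow_right_comm ζ b, hζ.pow_eq_one, one_pow, one_pow, div_one]
    rw [geom_sum_eq hne, hpow, sub_self, zero_div]

/-- The top left `m × n` block of the discrete Fourier matrix of order `max m n`; its entries are
the coefficients of the bilinear form. The order is `0` only when the block has no entries, so the
junk value `exp (_ / 0) = 1` never occurs in it. -/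
def fourierBlock (m n : ℕ) : Matrix (Fin m) (Fin n) ℂ :=
  of fun i j => Complex.exp (2 * Real.pi * Complex.I / (max m n : ℕ)) ^ ((i : ℕ) * (j : ℕ))

variable {m n : ℕ}

lemma norm_fourierBlock_apply (i : Fin m) (j : Fin n) : ‖fourierBlock m n i j‖ = 1 := by
  simp [fourierBlock, Complex.norm_exp]

lemma transpose_fourierBlock (m n : ℕ) : (fourierBlock m n)ᵀ = fourierBlock n m := by
  ext i j
  simp only [fourierBlock, transpose_apply, of_apply, max_comm, mul_comm]

lemma fourierBlock_mul_conjTranspose_self (hmn : m ≤ n) :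
    fourierBlock m n * (fourierBlock m n)ᴴ = (n : ℂ) • 1 := by
  ext i k
  have hn : n ≠ 0 := by have := i.isLt; omega
  have hζ := Complex.isPrimitiveRoot_exp n hn
  set ζ := Complex.exp (2 * Real.pi * Complex.I / n)
  have hconj : star ζ = ζ⁻¹ := (Complex.inv_eq_conj (hζ.norm'_eq_one hn)).symm
  have hterm (j : ℕ) : ζ ^ ((i : ℕ) * j) * star (ζ ^ ((k : ℕ) * j)) =
      (ζ ^ (i : ℕ) / ζ ^ (k : ℕ)) ^ j := by
    rw [star_pow, hconj, inv_pow, ← div_eq_mul_inv, pow_mul, pow_mul, div_pow]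
  calc (fourierBlock m n * (fourierBlock m n)ᴴ) i k
      = ∑ j : Fin n, (ζ ^ (i : ℕ) / ζ ^ (k : ℕ)) ^ (j : ℕ) := by
        simp only [mul_apply, conjTranspose_apply, fourierBlock, of_apply, max_eq_right hmn]
        exact Finset.sum_congr rfl fun j _ => hterm j
    _ = if (i : ℕ) = k then (n : ℂ) else 0 := by
        rw [Fin.sum_univ_eq_sum_range fun j => (ζ ^ (i : ℕ) / ζ ^ (k : ℕ)) ^ j]
        exact sum_div_pow_of_isPrimitiveRoot hζ (by omega) (by omega)
    _ = ((n : ℂ) • (1 : Matrix (Fin m) (Fin m) ℂ)) i k := by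
        simp [one_apply, Fin.ext_iff]

lemma conjTranspose_fourierBlock_mul_self (hnm : n ≤ m) :
    (fourierBlock m n)ᴴ * fourierBlock m n = (m : ℂ) • 1 := by
  rw [← transpose_fourierBlock n m, conjTranspose_transpose_eq_transpose_conjTranspose,
    ← transpose_mul, fourierBlock_mul_conjTranspose_self hnm, transpose_smul, transpose_one]

lemma l2_opNorm_fourierBlock_le (m n : ℕ) : ‖fourierBlock m n‖ ≤ √(max m n : ℕ) := by
  rcases le_total m n with hmn | hnm
  · simpa [hmn] using
      l2_opNorm_le_sqrt_of_mul_conjTranspose_self (fourierBlock_mul_conjTranspose_self hmn)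
  · simpa [hnm] using
      l2_opNorm_le_sqrt_of_conjTranspose_mul_self (conjTranspose_fourierBlock_mul_self hnm)

end fourierBlock

lemma sqrt_max_le_sqrt_add_sqrt (a b : ℝ) : √(max a b) ≤ √a + √b := by
  rw [Real.sqrt_monotone.map_max]
  exact max_le_add_of_nonneg (Real.sqrt_nonneg a) (Real.sqrt_nonneg b)

theorem complex_bilinear_ksz_constant_one_general (n : Fin 2 → ℕ) (p : Fin 2 → ℝ≥0∞)
    (hp : ∀ k, 2 ≤ p k) :
    ∃ A : MultilinearMap ℂ (fun k => Fin (n k) → ℂ) ℂ,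
      Unimodular A ∧
        opNorm p A ≤
          √(max (n 0) (n 1) : ℕ)
            * (n 0 : ℝ) ^ ((1 : ℝ) / 2 - (1 / p 0).toReal)
            * (n 1 : ℝ) ^ ((1 : ℝ) / 2 - (1 / p 1).toReal) := by
  refine ⟨coeffForm fun j => fourierBlock (n 0) (n 1) (j 0) (j 1), ?_, ?_⟩
  · exact unimodular_coeffForm_iff.mpr fun j => norm_fourierBlock_apply (j 0) (j 1)
  · refine (opNorm_coeffForm_le hp _).trans ?_
    gcongr
    exact l2_opNorm_fourierBlock_le (n 0) (n 1)

/-- **Complex bilinear Kahane–Salem–Zygmund inequality with constant 1.**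
For `p₁, p₂ ∈ [2,∞]` there is a unimodular bilinear form
`A : ℓ_{p₁}^{n₁} × ℓ_{p₂}^{n₂} → ℂ` with
`‖A‖ ≤ (n₁^{1/2} + n₂^{1/2}) · n₁^{1/2 − 1/p₁} · n₂^{1/2 − 1/p₂}`. -/
theorem complex_bilinear_ksz_constant_one (n₁ n₂ : ℕ) (h₁ : 0 < n₁) (h₂ : 0 < n₂)
    (p : Fin 2 → ℝ≥0∞) (hp : ∀ k, 2 ≤ p k) :
    ∃ A : MultilinearMap ℂ (fun k : Fin 2 => Fin (![n₁, n₂] k) → ℂ) ℂ,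
      Unimodular A ∧
        opNorm p A ≤
          ((n₁ : ℝ) ^ ((1 : ℝ) / 2) + (n₂ : ℝ) ^ ((1 : ℝ) / 2))
            * (n₁ : ℝ) ^ ((1 : ℝ) / 2 - (1 / p 0).toReal)
            * (n₂ : ℝ) ^ ((1 : ℝ) / 2 - (1 / p 1).toReal) := by
  obtain ⟨A, hA, hle⟩ := complex_bilinear_ksz_constant_one_general ![n₁, n₂] p hp
  refine ⟨A, hA, hle.trans ?_⟩
  simp only [cons_val_zero, cons_val_one, ← Real.sqrt_eq_rpow]
  gcongr
  exact_mod_cast sqrt_max_le_sqrt_add_sqrt n₁ n₂
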